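/- Strict monotonicity of day addition: for all valid dates D1 and D2 and every integer n, if D1 < D2 then D1 +d n < D2 +d n. -/

import Mathlib

/-- A value is either a date `(y, m, d)` (a triple of integers in the
Gregorian calendar) or the error element `⊥`. -/
inductive DValue : Type
  | date (y m d : ℤ) : DValue
  | bot : DValue
deriving DecidableEq

/-- `nb_days(y, m)`: the number of days of month `m` in year `y`
(meaningful for `1 ≤ m ≤ 12`). A year is leap iff it is divisible by 4
and not by 100, or divisible by 400. -/
def nbDays (y m : ℤ) : ℤ :=
  if m = 2 then (if (4 ∣ y ∧ ¬ (100 ∣ y)) ∨ 400 ∣ y then 29 else 28)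
  else if m = 4 ∨ m = 6 ∨ m = 9 ∨ m = 11 then 30
  else 31

theorem nbDays_bounds (y m : ℤ) : 28 ≤ nbDays y m ∧ nbDays y m ≤ 31 := by
  unfold nbDays; split_ifs <;> omega

/-- A date `(y, m, d)` is valid iff `1 ≤ m ≤ 12` and `1 ≤ d ≤ nb_days(y, m)`. -/
def ValidDate (y m d : ℤ) : Prop :=
  1 ≤ m ∧ m ≤ 12 ∧ 1 ≤ d ∧ d ≤ nbDays y m

/-- Year addition: `(y,m,d) +y n = (y+n,m,d)`; `⊥ +y n = ⊥`. -/
def DValue.addY : DValue → ℤ → DValue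
  | .date y m d, n => .date (y + n) m d
  | .bot, _ => .bot

/-- Month addition on a date `(y, m, d)` (with `⊥` for a month component
outside `[1,12]`):
`(y,m,d) +m n = (y,m+n,d)` if `1 ≤ m+n ≤ 12`,
`= (y+1,m,d) +m (n−12)` if `m+n > 12`, `= (y−1,m,d) +m (n+12)` if `m+n < 1`. -/
def addMonths (y m d n : ℤ) : DValue :=
  if _h : 1 ≤ m ∧ m ≤ 12 then
    if _h1 : 1 ≤ m + n ∧ m + n ≤ 12 then .date y (m + n) d
    else if _h2 : 12 < m + n then addMonths (y + 1) m d (n - 12)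
    else addMonths (y - 1) m d (n + 12)
  else .bot
termination_by (m + n - 12).toNat + (1 - (m + n)).toNat
decreasing_by all_goals omega

/-- Month addition on values: `⊥ +m n = ⊥`. -/
def DValue.addM : DValue → ℤ → DValue
  | .date y m d, n => addMonths y m d n
  | .bot, _ => .bot

/-- Day addition, following the rules:
for `(y,m,d)` with `1 ≤ d ≤ nb_days(y,m)`:
`(y,m,d) +d n = (y,m,d+n)` if `1 ≤ d+n ≤ nb_days(y,m)`;
`= ((y,m,1) +m 1) +d (n − (nb_days(y,m) − d) − 1)` if `d+n > nb_days(y,m)`;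
`= (y,m,1) +d (d−1+n)` if `d+n ≤ 0` and `d > 1`;
if `n+1 ≤ 0` then, letting `(y',m',d') = (y,m,1) +m (−1)`,
`(y,m,1) +d n = (y',m',1) +d (n + nb_days(y',m'))`.
If `d < 1` or `d > nb_days(y,m)` (or the month is out of range), the result is `⊥`. -/
def addDays (y m d n : ℤ) : DValue :=
  if _hm : 1 ≤ m ∧ m ≤ 12 then
    if _hd : 1 ≤ d ∧ d ≤ nbDays y m then
      if _h1 : 1 ≤ d + n ∧ d + n ≤ nbDays y m then .date y m (d + n)
      else if _h2 : nbDays y m < d + n then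
        match addMonths y m 1 1 with
        | .date y' m' _ => addDays y' m' 1 (n - (nbDays y m - d) - 1)
        | .bot => .bot
      else if _h3 : 1 < d then addDays y m 1 (d - 1 + n)
      else
        match _hprev : addMonths y m 1 (-1) with
        | .date y' m' _ => addDays y' m' 1 (n + nbDays y' m')
        | .bot => .bot
    else .bot
  else .bot
termination_by (if 0 ≤ n then n else 62 - n).toNat
decreasing_by
  · split_ifs <;> omega
  · split_ifs <;> omega
  · have h28 := nbDays_bounds y' m'
    split_ifs <;> omega

/-- Day addition on values: `⊥ +d n = ⊥`. -/
def DValue.addD : DValue → ℤ → DValue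
  | .date y m d, n => addDays y m d n
  | .bot, _ => .bot

/-- Rounding modes: down (`↓`), up (`↑`) and error (`⊥`). -/
inductive RMode : Type
  | down | up | err
deriving DecidableEq

/-- Rounding `rnd_r`: if `1 ≤ d ≤ nb_days(y,m)` then `rnd_r(y,m,d) = (y,m,d)`;
if `d > nb_days(y,m)` then `rnd_↓(y,m,d) = (y,m,nb_days(y,m))`,
`rnd_↑(y,m,d) = (y',m',1)` where `(y',m',d') = (y,m,d) +m 1`, and
`rnd_⊥(y,m,d) = ⊥`; if `d < 1` then `rnd_r(y,m,d) = ⊥`; `rnd_r(⊥) = ⊥`. -/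
def rnd (r : RMode) : DValue → DValue
  | .date y m d =>
    if 1 ≤ d ∧ d ≤ nbDays y m then .date y m d
    else if d < 1 then .bot
    else
      match r with
      | .down => .date y m (nbDays y m)
      | .up =>
        match addMonths y m d 1 with
        | .date y' m' _ => .date y' m' 1
        | .bot => .bot
      | .err => .bot
  | .bot => .bot

/-- A period `(py, pm, pd)`: a number of years, months and days. -/
structure Period : Type where
  py : ℤ
  pm : ℤ
  pd : ℤ
deriving DecidableEq

/-- Derived addition of a period with rounding mode `r`:
`e +r (py, pm, pd) = rnd_r((e +y py) +m pm) +d pd`. -/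
def addPeriod (r : RMode) (e : DValue) (p : Period) : DValue :=
  ((rnd r ((e.addY p.py).addM p.pm)).addD p.pd)

/-- Strict lexicographic order on dates. -/
def DateLt (y1 m1 d1 y2 m2 d2 : ℤ) : Prop :=
  y1 < y2 ∨ (y1 = y2 ∧ (m1 < m2 ∨ (m1 = m2 ∧ d1 < d2)))

/-- Large lexicographic order on dates. -/
def DateLe (y1 m1 d1 y2 m2 d2 : ℤ) : Prop :=
  y1 < y2 ∨ (y1 = y2 ∧ (m1 < m2 ∨ (m1 = m2 ∧ d1 ≤ d2)))

/-- Comparison lifted to values: it holds only between two dates. -/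
def DValue.lt : DValue → DValue → Prop
  | .date y1 m1 d1, .date y2 m2 d2 => DateLt y1 m1 d1 y2 m2 d2
  | _, _ => False

/-- Comparison lifted to values: it holds only between two dates. -/
def DValue.le : DValue → DValue → Prop
  | .date y1 m1 d1, .date y2 m2 d2 => DateLe y1 m1 d1 y2 m2 d2
  | _, _ => False

/-- A value is a valid date: it is not `⊥` and its components are valid. -/
def IsValidDate : DValue → Prop
  | .date y m d => ValidDate y m d
  | .bot => False

def yearOf : DValue → ℤ
  | .date y _ _ => y
  | .bot => 0

def monthOf : DValue → ℤ
  | .date _ m _ => m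
  | .bot => 0

def dayOf : DValue → ℤ
  | .date _ _ d => d
  | .bot => 0

/-- Date units: year, month, day. -/
inductive DUnit : Type
  | year | month | day
deriving DecidableEq

/-- Addition of `n` units to a value. -/
def addU : DUnit → DValue → ℤ → DValue
  | .year, v, n => v.addY n
  | .month, v, n => v.addM n
  | .day, v, n => v.addD n

/-- Componentwise addition of periods. -/
def Period.add (p q : Period) : Period :=
  ⟨p.py + q.py, p.pm + q.pm, p.pd + q.pd⟩

/-- Leap day count. -/
def lpD (y : ℤ) : ℤ := if (4 ∣ y ∧ ¬ (100 ∣ y)) ∨ 400 ∣ y then 1 else 0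

/-- Days before year `y`. -/
def yrD (y : ℤ) : ℤ := 365 * y + (y - 1) / 4 - (y - 1) / 100 + (y - 1) / 400

/-- Days before month `m`. -/
def moD (y m : ℤ) : ℤ :=
  if m ≤ 1 then 0 else if m = 2 then 31 else lpD y +
  (if m = 3 then 59 else if m = 4 then 90 else if m = 5 then 120 else if m = 6 then 151
   else if m = 7 then 181 else if m = 8 then 212 else if m = 9 then 243
   else if m = 10 then 273 else if m = 11 then 304 else if m = 12 then 334 else 365)

theorem yrD_succ (y : ℤ) : yrD (y + 1) = yrD y + 365 + lpD y := by
  unfold yrD lpD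
  split_ifs <;> omega

theorem lpD_bd (y : ℤ) : 0 ≤ lpD y ∧ lpD y ≤ 1 := by
  unfold lpD; split_ifs <;> omega

theorem yrD_mono : Monotone yrD := by
  apply monotone_int_of_le_succ
  intro y
  have := yrD_succ y
  have := lpD_bd y
  omega

theorem nbDays_lp (y m : ℤ) : nbDays y m = if m = 2 then 28 + lpD y
    else if m = 4 ∨ m = 6 ∨ m = 9 ∨ m = 11 then 30 else 31 := by
  unfold nbDays lpD; split_ifs <;> omega

theorem moD_succ (y m : ℤ) (h1 : 1 ≤ m) (h2 : m ≤ 12) :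
    moD y (m + 1) = moD y m + nbDays y m := by
  rw [nbDays_lp]
  unfold moD
  interval_cases m <;> norm_num <;> ring

theorem moD_13 (y : ℤ) : moD y 13 = 365 + lpD y := by
  unfold moD; norm_num; ring

theorem moD_1 (y : ℤ) : moD y 1 = 0 := by
  unfold moD; norm_num

theorem moD_mono (y a b : ℤ) (ha : 1 ≤ a) (hab : a ≤ b) (hb : b ≤ 13) : moD y a ≤ moD y b := by
  have key : ∀ k : ℕ, a + k ≤ 13 → moD y a ≤ moD y (a + k) := by
    intro k
    induction k with
    | zero => intro _; simp
    | succ k ih =>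
      intro h
      push_cast at h ⊢
      have h1 := ih (by omega)
      have h2 := moD_succ y (a + k) (by omega) (by omega)
      have h3 := nbDays_bounds y (a + k)
      rw [← add_assoc]
      omega
  have h := key (b - a).toNat (by omega)
  rwa [show a + ((b - a).toNat : ℤ) = b by omega] at h

/-- Day number. -/
def ordD (y m d : ℤ) : ℤ := yrD y + moD y m + d

theorem ordD_lt (y1 m1 d1 y2 m2 d2 : ℤ)
    (h1 : ValidDate y1 m1 d1) (h2 : ValidDate y2 m2 d2)
    (hlt : DateLt y1 m1 d1 y2 m2 d2) : ordD y1 m1 d1 < ordD y2 m2 d2 := by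
  obtain ⟨a1, b1, c1, e1⟩ := h1
  obtain ⟨a2, b2, c2, e2⟩ := h2
  have s1 := moD_succ y1 m1 a1 b1
  unfold ordD
  rcases hlt with h | ⟨rfl, h | ⟨rfl, h⟩⟩
  · have := yrD_mono (show y1 + 1 ≤ y2 by omega)
    have := yrD_succ y1
    have := moD_13 y1
    have := moD_mono y1 (m1 + 1) 13 (by omega) (by omega) (by omega)
    have := moD_mono y2 1 m2 (by omega) (by omega) (by omega)
    have := moD_1 y2
    omega
  · have := moD_mono y1 (m1 + 1) m2 (by omega) (by omega) (by omega)
    omega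
  · omega

theorem addMonths_one (y m : ℤ) (h1 : 1 ≤ m) (h2 : m ≤ 12) :
    ∃ y' m', addMonths y m 1 1 = .date y' m' 1 ∧ 1 ≤ m' ∧ m' ≤ 12 ∧
      ordD y' m' 1 = ordD y m 1 + nbDays y m := by
  have s := moD_succ y m h1 h2
  by_cases h : m = 12
  · subst h
    refine ⟨y + 1, 1, ?_, by omega, by omega, ?_⟩
    · rw [addMonths]; norm_num
      rw [addMonths]; norm_num
    · have := yrD_succ y
      have := moD_13 y
      have := moD_1 (y + 1)
      norm_num at s
      unfold ordD; omega
  · refine ⟨y, m + 1, ?_, by omega, by omega, ?_⟩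
    · rw [addMonths, dif_pos ⟨h1, h2⟩, dif_pos (by omega)]
    · unfold ordD; omega

theorem addMonths_neg (y m : ℤ) (h1 : 1 ≤ m) (h2 : m ≤ 12) :
    ∃ y' m', addMonths y m 1 (-1) = .date y' m' 1 ∧ 1 ≤ m' ∧ m' ≤ 12 ∧
      ordD y m 1 = ordD y' m' 1 + nbDays y' m' := by
  by_cases h : m = 1
  · subst h
    refine ⟨y - 1, 12, ?_, by omega, by omega, ?_⟩
    · rw [addMonths]; norm_num
      rw [addMonths]; norm_num
    · have h := yrD_succ (y - 1)
      have := moD_13 (y - 1)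
      have := moD_1 y
      have s := moD_succ (y - 1) 12 (by omega) (by omega)
      norm_num at s h
      unfold ordD; omega
  · refine ⟨y, m - 1, ?_, by omega, by omega, ?_⟩
    · rw [addMonths, dif_pos ⟨h1, h2⟩, dif_pos (by omega)]; rfl
    · have s := moD_succ y (m - 1) (by omega) (by omega)
      rw [sub_add_cancel] at s
      unfold ordD; omega

theorem addDays_spec (k : ℕ) : ∀ (y m d n : ℤ), (if 0 ≤ n then n else 62 - n).toNat < k →
    ValidDate y m d → ∃ y' m' d', addDays y m d n = .date y' m' d' ∧ ValidDate y' m' d' ∧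
      ordD y' m' d' = ordD y m d + n := by
  induction k with
  | zero => intro y m d n h; omega
  | succ k ih =>
    intro y m d n hk hv
    obtain ⟨a, b, c, e⟩ := hv
    rw [addDays, dif_pos ⟨a, b⟩, dif_pos ⟨c, e⟩]
    split_ifs with h1 h2 h3
    · exact ⟨y, m, d + n, rfl, ⟨a, b, h1.1, h1.2⟩, by unfold ordD; omega⟩
    · obtain ⟨y', m', hq, p1, p2, p3⟩ := addMonths_one y m a b
      have hb := nbDays_bounds y' m'
      obtain ⟨y2, m2, d2, q1, q2, q3⟩ := ih y' m' 1 (n - (nbDays y m - d) - 1)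
        (by split_ifs at hk ⊢ <;> omega) ⟨p1, p2, by omega, by omega⟩
      refine ⟨y2, m2, d2, ?_, q2, ?_⟩
      · rw [hq]; exact q1
      · unfold ordD at *; omega
    · obtain ⟨y2, m2, d2, q1, q2, q3⟩ := ih y m 1 (d - 1 + n)
        (by split_ifs at hk ⊢ <;> omega) ⟨a, b, by omega, by omega⟩
      exact ⟨y2, m2, d2, q1, q2, by unfold ordD at *; omega⟩
    · obtain ⟨y', m', hq, p1, p2, p3⟩ := addMonths_neg y m a b
      have hb := nbDays_bounds y' m'
      obtain ⟨y2, m2, d2, q1, q2, q3⟩ := ih y' m' 1 (n + nbDays y' m')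
        (by split_ifs at hk ⊢ <;> omega) ⟨p1, p2, by omega, by omega⟩
      refine ⟨y2, m2, d2, ?_, q2, ?_⟩
      · split
        · rename_i heq
          rw [hq] at heq
          injection heq with t1 t2 t3
          subst t1 t2
          exact q1
        · rename_i heq
          rw [hq] at heq
          cases heq
      · unfold ordD at *; omega

/-- **Strict monotonicity of day addition**: for all valid dates `D1 < D2` and
every integer `n`, `D1 +d n < D2 +d n`. -/
theorem strict_monotonicity_day (y1 m1 d1 y2 m2 d2 n : ℤ)
    (h1 : ValidDate y1 m1 d1) (h2 : ValidDate y2 m2 d2)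
    (hlt : DateLt y1 m1 d1 y2 m2 d2) :
    DValue.lt (addDays y1 m1 d1 n) (addDays y2 m2 d2 n) := by
  obtain ⟨a, b, c, e1, v1, o1⟩ := addDays_spec _ y1 m1 d1 n (Nat.lt_succ_self _) h1
  obtain ⟨a', b', c', e2, v2, o2⟩ := addDays_spec _ y2 m2 d2 n (Nat.lt_succ_self _) h2
  rw [e1, e2]
  have ho := ordD_lt _ _ _ _ _ _ h1 h2 hlt
  show DateLt a b c a' b' c'
  by_contra hn
  have hc : DateLt a' b' c' a b c ∨ (a = a' ∧ b = b' ∧ c = c') := by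
    unfold DateLt at *; omega
  rcases hc with hc | ⟨rfl, rfl, rfl⟩
  · have := ordD_lt _ _ _ _ _ _ v2 v1 hc
    omega
  · omega
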